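/- Let R be a K-vector space, M the recursive brace operation on decorated trees, and ⋆ the induced Loday–Ronco product on decorated forests. For all decorated forests f_1, f_2, the product f_1 ⋆ f_2 equals the sum of all forests obtained by choosing, for each tree of f_2, either to insert it among the trees of f_1 (shuffle) or to graft it onto a vertex of a tree of f_1, in all possible ways preserving the left-to-right order of the trees of f_2 among themselves and the left-to-right order of the trees of f_1. -/

import Mathlib

/-! Common setup: `R`-decorated planar rooted trees, decorated forests,
the free module `R^𝒯` they span, and the Loday–Ronco product on `T(R^𝒯)`
induced by the recursive brace operation `M(B₊ˣ(f₁); f₂) = B₊ˣ(f₁ ⋆ f₂)`. -/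

/-- Planar rooted trees with vertices decorated by elements of `R`. -/
inductive PTree (R : Type*) : Type _
  | node : R → List (PTree R) → PTree R

section

variable (K : Type*) [Field K]
variable {R : Type*}

/-- All splittings of a list into a prefix and a suffix. -/
def splits {α : Type*} (l : List α) : List (List α × List α) :=
  (List.range (l.length + 1)).map fun i => (l.take i, l.drop i)

/-- All factorizations of a list into `k` (possibly empty) consecutive factors. -/
def splitsN {α : Type*} : ℕ → List α → List (List (List α))
  | 0, l => if l.isEmpty then [[]] else []
  | k + 1, l => (splits l).flatMap fun p => (splitsN k p.2).map fun r => p.1 :: r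

/-- Decorated forests: words of decorated trees. -/
abbrev Forest (R : Type*) := List (PTree R)

/-- `B₊ˣ` : grafting of a decorated forest onto a new root decorated by `x`. -/
def Bplus (x : R) (f : Forest R) : PTree R := PTree.node x f

variable (R)

/-- The space `R^𝒯` spanned by the decorated trees. -/
abbrev TreeMod := PTree R →₀ K

/-- The space `T(R^𝒯)` of decorated forests. -/
abbrev ForestMod := Forest R →₀ K

variable {R K}

/-- The element of `T(R^𝒯)` obtained from a word whose letters are linear
combinations of decorated trees, expanding multilinearly (in particular a word
containing the letter `0` gives `0`). -/
noncomputable def wordOf : List (TreeMod K R) → ForestMod K R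
  | [] => Finsupp.single ([] : Forest R) 1
  | a :: rest => a.sum fun t c => c • Finsupp.mapDomain (List.cons t) (wordOf rest)

/-- Extension `M(F;G)` of the brace operation to pairs of forests:
`M(1;1) = 0`, `M(1;s) = s` and `M(t;G) = M(t;G)` for a single tree `t`
(so `M(t;1) = t`), `M(F;G) = 0` if `F` has more than one tree. -/
noncomputable def MextF (Mh : PTree R → Forest R → TreeMod K R) : Forest R → Forest R → TreeMod K R
  | [], [] => 0
  | [], [s] => Finsupp.single s 1
  | [], _ :: _ :: _ => 0
  | [t], ys => Mh t ys
  | _ :: _ :: _, _ => 0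

/-- The Loday–Ronco product `X ⋆ Y = Σ_{k≥1} Σ_{X=X¹⋯X^k, Y=Y¹⋯Y^k}
M(X¹;Y¹)⋯M(X^k;Y^k)` built from a brace operation `Mh` on decorated trees
(with `1 ⋆ 1 = 1`; the terms with `k > |X| + |Y|` vanish, each containing the
letter `M(1;1) = 0`). -/
noncomputable def starRHS (Mh : PTree R → Forest R → TreeMod K R) : Forest R → Forest R → ForestMod K R
  | [], [] => Finsupp.single ([] : Forest R) 1
  | X, Y =>
    ((List.range (X.length + Y.length)).flatMap fun k =>
      (splitsN (k + 1) X).flatMap fun Xs =>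
        (splitsN (k + 1) Y).map fun Ys =>
          wordOf (List.zipWith (MextF Mh) Xs Ys)).sum

/-- `Mh` and `star` satisfy the defining recursion of the brace operation on
decorated trees: `M(B₊ˣ(f₁); f₂) = B₊ˣ(f₁ ⋆ f₂)` (with `B₊ˣ` extended linearly),
where `⋆` is the Loday–Ronco product built from `Mh`. -/
def IsTreeBrace (Mh : PTree R → Forest R → TreeMod K R)
    (star : Forest R → Forest R → ForestMod K R) : Prop :=
  (∀ (x : R) (f₁ f₂ : Forest R),
      Mh (Bplus x f₁) f₂ = Finsupp.mapDomain (Bplus x) (star f₁ f₂)) ∧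
  (∀ X Y : Forest R, star X Y = starRHS Mh X Y)

end

section

variable {K : Type*} [Field K] {R : Type*}

mutual
/-- All trees obtained by grafting the ordered trees `ss` onto vertices of `t`,
in all possible ways preserving the left-to-right order of the `ss` in the
resulting planar tree (each way listed once). -/
def graftT : PTree R → List (PTree R) → List (PTree R)
  | PTree.node x cs, ss => (graftF cs ss).map (PTree.node x)

/-- All forests obtained from the forest `cs` by choosing, for each tree of `ss`,
either to insert it among the trees of `cs` (shuffle) or to graft it onto a
vertex of one of the trees of `cs`, in all possible ways preserving the
left-to-right order of the trees of `ss` among themselves and the left-to-right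
order of the trees of `cs`. -/
def graftF : List (PTree R) → List (PTree R) → List (List (PTree R))
  | [], ss => [ss]
  | c :: cs, ss =>
      (splits ss).flatMap fun p =>
        (splits p.2).flatMap fun p2 =>
          (graftT c p2.1).flatMap fun c' =>
            (graftF cs p2.2).map fun tail => p.1 ++ c' :: tail
end

/-! A term of `X ⋆ Y` survives only if each of its factors uses up a tree, since `M(1;1) = 0`; so
the sum over the number of factors is finite and can be unfolded at the first factor.  That factor
either is the first tree of `Y` or is `M(t;Y¹)` with `t` the first tree of `X`.  Hence
`tX ⋆ sY = s(tX ⋆ Y) + ∑ M(t;Y¹)(X ⋆ Y²)`, the last sum running over `sY = Y¹Y²`.  Sorting the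
shuffle graftings by whether they begin with `s` gives the same recursion, and
`M(B₊ˣ(f);g) = B₊ˣ(f ⋆ g)` passes from the subtrees of a tree to the tree itself. -/

theorem sum_map_sum_map_comm {α β M : Type*} [AddCommMonoid M] (l : List α) (l' : List β)
    (f : α → β → M) :
    (l.map fun a => (l'.map fun b => f a b).sum).sum =
      (l'.map fun b => (l.map fun a => f a b).sum).sum := by
  induction l with
  | nil => simp
  | cons a l ih => simp [ih, List.sum_map_add]

theorem sum_flatMap {α M : Type*} [AddMonoid M] (l : List α) (f : α → List M) :
    (l.flatMap f).sum = (l.map fun a => (f a).sum).sum := by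
  rw [List.flatMap_def, List.sum_flatten, List.map_map, Function.comp_def]

theorem sum_map_finsetSum_comm {α β M : Type*} [AddCommMonoid M] (l : List α) (s : Finset β)
    (f : α → β → M) :
    (l.map fun a => ∑ b ∈ s, f a b).sum = ∑ b ∈ s, (l.map fun a => f a b).sum := by
  induction l with
  | nil => simp
  | cons a l ih => simp [ih, Finset.sum_add_distrib]

theorem splits_nil {α : Type*} : splits ([] : List α) = [([], [])] := rfl

theorem splits_cons {α : Type*} (a : α) (l : List α) :
    splits (a :: l) = ([], a :: l) :: (splits l).map fun p => (a :: p.1, p.2) := by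
  simp [splits, List.range_succ_eq_map (n := l.length + 1), Function.comp_def]

theorem length_add_length_of_mem_splits {α : Type*} {l : List α} {p : List α × List α}
    (hp : p ∈ splits l) : p.1.length + p.2.length = l.length := by
  obtain ⟨i, -, rfl⟩ := List.mem_map.1 hp
  rw [← List.length_append, List.take_append_drop]

section FormalSum

variable {α β S : Type*}

/-- The formal sum of the entries of a list, with multiplicity. -/
noncomputable def formalSum (S : Type*) [AddCommMonoidWithOne S] (l : List α) : α →₀ S :=
  (l.map fun a => Finsupp.single a 1).sum

section Additive

variable [AddCommMonoidWithOne S]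

theorem formalSum_singleton (a : α) : formalSum S [a] = Finsupp.single a 1 := by
  simp [formalSum]

theorem formalSum_append (l m : List α) :
    formalSum S (l ++ m) = formalSum S l + formalSum S m := by
  simp [formalSum]

theorem formalSum_flatMap (l : List β) (f : β → List α) :
    formalSum S (l.flatMap f) = (l.map fun b => formalSum S (f b)).sum := by
  rw [formalSum, List.map_flatMap, sum_flatMap]
  rfl

theorem mapDomain_formalSum (f : α → β) (l : List α) :
    Finsupp.mapDomain f (formalSum S l) = formalSum S (l.map f) := by
  induction l with
  | nil => simp [formalSum]
  | cons a l ih =>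
    rw [← List.singleton_append, formalSum_append, Finsupp.mapDomain_add, ih, List.map_append,
      formalSum_append]
    simp [formalSum_singleton]

end Additive

variable [CommSemiring S]

/-- Concatenation of a letter and a word, extended bilinearly to `V ⊗ T(V) → T(V)` for the free
module `V` on `α`. -/
noncomputable def consBilin : (α →₀ S) →ₗ[S] (List α →₀ S) →ₗ[S] (List α →₀ S) :=
  Finsupp.linearCombination S fun a => Finsupp.lmapDomain S S (List.cons a)

theorem consBilin_single (a : α) (w : List α →₀ S) :
    consBilin (Finsupp.single a 1) w = Finsupp.mapDomain (List.cons a) w := by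
  simp [consBilin]

theorem consBilin_formalSum (l : List α) (m : List (List α)) :
    consBilin (formalSum S l) (formalSum S m) =
      formalSum S (l.flatMap fun a => m.map (List.cons a)) := by
  induction l with
  | nil => simp [formalSum]
  | cons a l ih =>
    rw [← List.singleton_append, formalSum_append, map_add, LinearMap.add_apply, ih,
      formalSum_singleton, consBilin_single, mapDomain_formalSum, List.flatMap_append,
      formalSum_append, List.flatMap_singleton]

end FormalSum

theorem wordOf_cons (a : TreeMod K R) (w : List (TreeMod K R)) :
    wordOf (a :: w) = consBilin a (wordOf w) := by
  simp [wordOf, consBilin, Finsupp.linearCombination_apply, LinearMap.finsupp_sum_apply]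

/-- The part of the Loday–Ronco product with exactly `k` factors,
`∑ L(X¹;Y¹)⋯L(Xᵏ;Yᵏ)` over `X = X¹⋯Xᵏ` and `Y = Y¹⋯Yᵏ`, for an arbitrary extended brace `L`. -/
noncomputable def factorSum (L : Forest R → Forest R → TreeMod K R) (k : ℕ) (X Y : Forest R) :
    ForestMod K R :=
  ((splitsN k X).map fun Xs =>
    ((splitsN k Y).map fun Ys => wordOf (List.zipWith L Xs Ys)).sum).sum

section FactorSum

variable (L : Forest R → Forest R → TreeMod K R)

theorem factorSum_zero (X Y : Forest R) :
    factorSum L 0 X Y = if X = [] ∧ Y = [] then Finsupp.single [] 1 else 0 := by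
  cases X <;> cases Y <;> simp [factorSum, splitsN, wordOf]

theorem factorSum_succ (k : ℕ) (X Y : Forest R) :
    factorSum L (k + 1) X Y = ((splits X).map fun p => ((splits Y).map fun q =>
      consBilin (L p.1 q.1) (factorSum L k p.2 q.2)).sum).sum := by
  simp only [factorSum, splitsN, List.map_flatMap, sum_flatMap, List.map_map, Function.comp_def,
    List.zipWith_cons_cons, wordOf_cons, map_list_sum]
  congr 1
  exact List.map_congr_left fun p _ => sum_map_sum_map_comm _ _ _

theorem factorSum_eq_zero_of_length_lt (hL : L [] [] = 0) {k : ℕ} {X Y : Forest R}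
    (hk : X.length + Y.length < k) : factorSum L k X Y = 0 := by
  induction k generalizing X Y with
  | zero => omega
  | succ k ih =>
    rw [factorSum_succ]
    refine List.sum_eq_zero ?_
    simp only [List.forall_mem_map]
    refine fun p hp => List.sum_eq_zero ?_
    simp only [List.forall_mem_map]
    intro q hq
    have hX := length_add_length_of_mem_splits hp
    have hY := length_add_length_of_mem_splits hq
    by_cases hnil : p.1 = [] ∧ q.1 = []
    · simp [hnil, hL]
    · simp only [← List.length_eq_zero_iff] at hnil
      rw [ih (by omega), map_zero]

end FactorSum

section LodayRonco

variable (Mh : PTree R → Forest R → TreeMod K R)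

theorem starRHS_eq_sum_factorSum {n : ℕ} {X Y : Forest R} (hn : X.length + Y.length < n) :
    starRHS Mh X Y = ∑ k ∈ Finset.range n, factorSum (MextF Mh) k X Y := by
  have hpos : ((List.range (X.length + Y.length)).flatMap fun k =>
      (splitsN (k + 1) X).flatMap fun Xs =>
        (splitsN (k + 1) Y).map fun Ys => wordOf (List.zipWith (MextF Mh) Xs Ys)).sum =
      ∑ k ∈ Finset.range (X.length + Y.length), factorSum (MextF Mh) (k + 1) X Y := by
    simp only [sum_flatMap]
    rfl
  rw [Finset.eventually_constant_sum
      (fun k hk => factorSum_eq_zero_of_length_lt (MextF Mh) rfl hk) hn,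
    Finset.sum_range_succ', factorSum_zero, ← hpos]
  cases X <;> cases Y <;> simp [starRHS]

/-- Not circular: the summand containing `X ⋆ Y` itself has the coefficient `M(1;1) = 0`. -/
theorem starRHS_eq_sum_splits {X Y : Forest R} (hne : ¬(X = [] ∧ Y = [])) :
    starRHS Mh X Y = ((splits X).map fun p => ((splits Y).map fun q =>
      consBilin (MextF Mh p.1 q.1) (starRHS Mh p.2 q.2)).sum).sum := by
  obtain ⟨n, hn⟩ := exists_gt (X.length + Y.length)
  have hsuffix : ∀ p ∈ splits X, ∀ q ∈ splits Y,
      consBilin (MextF Mh p.1 q.1) (starRHS Mh p.2 q.2) =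
        ∑ k ∈ Finset.range n, consBilin (MextF Mh p.1 q.1) (factorSum (MextF Mh) k p.2 q.2) := by
    intro p hp q hq
    have hX := length_add_length_of_mem_splits hp
    have hY := length_add_length_of_mem_splits hq
    rw [starRHS_eq_sum_factorSum Mh (lt_of_le_of_lt (by omega) hn), map_sum]
  calc starRHS Mh X Y
    _ = ∑ k ∈ Finset.range n, factorSum (MextF Mh) (k + 1) X Y := by
      rw [starRHS_eq_sum_factorSum Mh (hn.trans n.lt_succ_self), Finset.sum_range_succ',
        factorSum_zero, if_neg hne, add_zero]
    _ = ((splits X).map fun p => ((splits Y).map fun q => ∑ k ∈ Finset.range n,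
          consBilin (MextF Mh p.1 q.1) (factorSum (MextF Mh) k p.2 q.2)).sum).sum := by
      simp only [factorSum_succ, sum_map_finsetSum_comm]
    _ = _ := congrArg List.sum <| List.map_congr_left fun p hp =>
      congrArg List.sum <| List.map_congr_left fun q hq => (hsuffix p hp q hq).symm

theorem sum_splits_MextF_nil_cons (s : PTree R) (Y : Forest R) (F : Forest R → ForestMod K R) :
    ((splits (s :: Y)).map fun q => consBilin (MextF Mh [] q.1) (F q.2)).sum =
      consBilin (Finsupp.single s 1) (F Y) := by
  cases Y <;> simp [splits_nil, splits_cons, MextF, Function.comp_def]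

theorem sum_splits_MextF_cons (t : PTree R) (X Y : Forest R)
    (F : Forest R → Forest R → ForestMod K R) :
    ((splits (t :: X)).map fun p => ((splits Y).map fun q =>
      consBilin (MextF Mh p.1 q.1) (F p.2 q.2)).sum).sum =
    ((splits Y).map fun q => consBilin (MextF Mh [] q.1) (F (t :: X) q.2)).sum +
    ((splits Y).map fun q => consBilin (Mh t q.1) (F X q.2)).sum := by
  cases X <;> simp [splits_nil, splits_cons, MextF, Function.comp_def]

theorem starRHS_nil_left (Y : Forest R) : starRHS Mh [] Y = Finsupp.single Y 1 := by
  induction Y with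
  | nil => rfl
  | cons s Y ih =>
    rw [starRHS_eq_sum_splits Mh (by simp), splits_nil, List.map_singleton, List.sum_singleton,
      sum_splits_MextF_nil_cons, ih, consBilin_single, Finsupp.mapDomain_single]

theorem starRHS_cons_nil (t : PTree R) (X : Forest R) :
    starRHS Mh (t :: X) [] = consBilin (Mh t []) (starRHS Mh X []) := by
  rw [starRHS_eq_sum_splits Mh (by simp), sum_splits_MextF_cons]
  simp [splits_nil, MextF]

theorem starRHS_cons_cons (t s : PTree R) (X Y : Forest R) :
    starRHS Mh (t :: X) (s :: Y) =
      consBilin (Finsupp.single s 1) (starRHS Mh (t :: X) Y) +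
      ((splits (s :: Y)).map fun q => consBilin (Mh t q.1) (starRHS Mh X q.2)).sum := by
  rw [starRHS_eq_sum_splits Mh (by simp), sum_splits_MextF_cons, sum_splits_MextF_nil_cons]

end LodayRonco

theorem graftF_cons_nil (t : PTree R) (X : Forest R) :
    graftF (t :: X) [] =
      (graftT t []).flatMap fun t' => (graftF X []).map (List.cons t') := by
  simp [graftF, splits_nil]

theorem graftF_cons_cons (t s : PTree R) (X Y : Forest R) :
    graftF (t :: X) (s :: Y) =
      ((splits (s :: Y)).flatMap fun q =>
        (graftT t q.1).flatMap fun t' => (graftF X q.2).map (List.cons t')) ++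
      (graftF (t :: X) Y).map (List.cons s) := by
  rw [graftF, splits_cons, List.flatMap_cons, graftF]
  simp [splits_cons, List.map_flatMap, List.flatMap_map, Function.comp_def]

theorem starRHS_eq_formalSum_graftF (Mh : PTree R → Forest R → TreeMod K R) {X : Forest R}
    (hX : ∀ t ∈ X, ∀ Y, Mh t Y = formalSum K (graftT t Y)) (Y : Forest R) :
    starRHS Mh X Y = formalSum K (graftF X Y) := by
  induction X generalizing Y with
  | nil => rw [starRHS_nil_left, graftF, formalSum_singleton]
  | cons t X ihX =>
    obtain ⟨ht, hX⟩ := List.forall_mem_cons.1 hX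
    induction Y with
    | nil =>
      rw [starRHS_cons_nil, graftF_cons_nil, ht, ihX hX, consBilin_formalSum]
    | cons s Y ihY =>
      simp only [starRHS_cons_cons, graftF_cons_cons, formalSum_append,
        formalSum_flatMap (splits _), ← consBilin_formalSum, ht, ihX hX, ihY, consBilin_single,
        mapDomain_formalSum]
      rw [add_comm]

theorem IsTreeBrace.eq_formalSum_graftT {Mh : PTree R → Forest R → TreeMod K R}
    {star : Forest R → Forest R → ForestMod K R} (h : IsTreeBrace Mh star) :
    ∀ (t : PTree R) (Y : Forest R), Mh t Y = formalSum K (graftT t Y)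
  | .node x cs, Y =>
    have hcs : ∀ t ∈ cs, ∀ Y, Mh t Y = formalSum K (graftT t Y) :=
      fun t _ Y => h.eq_formalSum_graftT t Y
    calc Mh (.node x cs) Y
      _ = Finsupp.mapDomain (.node x) (star cs Y) := h.1 x cs Y
      _ = Finsupp.mapDomain (.node x) (formalSum K (graftF cs Y)) := by
        rw [h.2, starRHS_eq_formalSum_graftF Mh hcs]
      _ = formalSum K (graftT (.node x cs) Y) := by rw [mapDomain_formalSum, graftT]

/-- Let `R` be a `K`-vector space, `M` the recursive brace
operation on decorated trees, and `⋆` the induced Loday–Ronco product on decorated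
forests.  For all decorated forests `f₁, f₂`, the product `f₁ ⋆ f₂` equals the sum
of all forests obtained by choosing, for each tree of `f₂`, either to insert it
among the trees of `f₁` (shuffle) or to graft it onto a vertex of a tree of `f₁`,
in all possible ways preserving the left-to-right order of the trees of `f₂`
among themselves and the left-to-right order of the trees of `f₁`. -/
theorem tree_star_is_shuffle_grafting
    (Mh : PTree R → Forest R → TreeMod K R)
    (star : Forest R → Forest R → ForestMod K R)
    (h : IsTreeBrace Mh star) :
    ∀ f₁ f₂ : Forest R,
      star f₁ f₂ = ((graftF f₁ f₂).map fun g => Finsupp.single g (1 : K)).sum := by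
  intro f₁ f₂
  rw [h.2, starRHS_eq_formalSum_graftF Mh fun t _ Y => h.eq_formalSum_graftT t Y]
  rfl

end
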